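/- Let (H,α) be a monoidal Hom-Hopf algebra. The map ρ:H→H⊗(H^op⊗H), h↦α(h_21)⊗(α^{-1}(S(h_1))⊗h_22) makes (H,α) a right Hom-comodule algebra over the monoidal Hom-bialgebra (H^op⊗H, α⊗α); in particular ρ is multiplicative: ρ(gh)=ρ(g)ρ(h) where the product on H^op⊗H is (h⊗k)(h'⊗k')=h'h⊗kk'. -/

import Mathlib

open TensorProduct

namespace HomPaper

variable {k : Type*} [CommRing k]
variable {A C V : Type*}
variable [AddCommGroup A] [Module k A] [AddCommGroup C] [Module k C]
variable [AddCommGroup V] [Module k V]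

/-- Monoidal Hom-algebra axioms. -/
def IsHomAlgebra (α : A ≃ₗ[k] A) (mul : A →ₗ[k] A →ₗ[k] A) (one : A) : Prop :=
  (∀ a b c, mul (α a) (mul b c) = mul (mul a b) (α c)) ∧
  (∀ a, mul a one = α a) ∧ (∀ a, mul one a = α a) ∧
  (∀ a b, α (mul a b) = mul (α a) (α b)) ∧ α one = one

/-- Monoidal Hom-coalgebra axioms. -/
def IsHomCoalgebra (γ : C ≃ₗ[k] C) (Δ : C →ₗ[k] C ⊗[k] C) (ε : C →ₗ[k] k) : Prop :=
  (∀ c, TensorProduct.map γ.symm.toLinearMap Δ (Δ c)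
      = TensorProduct.assoc k C C C (TensorProduct.map Δ γ.symm.toLinearMap (Δ c))) ∧
  (∀ c, TensorProduct.lid k C (TensorProduct.map ε LinearMap.id (Δ c)) = γ.symm c) ∧
  (∀ c, TensorProduct.rid k C (TensorProduct.map LinearMap.id ε (Δ c)) = γ.symm c) ∧
  (∀ c, Δ (γ c) = TensorProduct.map γ.toLinearMap γ.toLinearMap (Δ c)) ∧
  (∀ c, ε (γ c) = ε c)

/-- Hom-entwining structure axioms for ψ : C ⊗ A → A ⊗ C, ψ(c⊗a) = a_κ ⊗ c^κ. -/
def IsHomEntwining (α : A ≃ₗ[k] A) (γ : C ≃ₗ[k] C) (mul : A →ₗ[k] A →ₗ[k] A) (one : A)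
    (Δ : C →ₗ[k] C ⊗[k] C) (ε : C →ₗ[k] k) (ψ : C ⊗[k] A →ₗ[k] A ⊗[k] C) : Prop :=
  -- (aa')_κ ⊗ γ(c)^κ = a_κ a'_λ ⊗ γ(c^{κλ})
  (∀ c a a', ψ (γ c ⊗ₜ mul a a')
      = TensorProduct.map (TensorProduct.lift mul) γ.toLinearMap
          ((TensorProduct.assoc k A A C).symm
            (TensorProduct.map LinearMap.id ψ
              (TensorProduct.assoc k A C A (ψ (c ⊗ₜ a) ⊗ₜ a'))))) ∧
  -- α⁻¹(a_κ) ⊗ c^κ₁ ⊗ c^κ₂ = α⁻¹(a)_{κλ} ⊗ c₁^λ ⊗ c₂^κ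
  (∀ c a, TensorProduct.map α.symm.toLinearMap Δ (ψ (c ⊗ₜ a))
      = TensorProduct.assoc k A C C
          (TensorProduct.map ψ LinearMap.id
            ((TensorProduct.assoc k C A C).symm
              (TensorProduct.map LinearMap.id ψ
                (TensorProduct.assoc k C C A (Δ c ⊗ₜ α.symm a)))))) ∧
  -- 1_κ ⊗ c^κ = 1 ⊗ c
  (∀ c, ψ (c ⊗ₜ one) = one ⊗ₜ c) ∧
  -- a_κ ε(c^κ) = a ε(c)
  (∀ c a, TensorProduct.rid k A (TensorProduct.map LinearMap.id ε (ψ (c ⊗ₜ a))) = ε c • a) ∧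
  -- ψ is a morphism in the Hom-category
  (∀ c a, ψ (γ c ⊗ₜ α a) = TensorProduct.map α.toLinearMap γ.toLinearMap (ψ (c ⊗ₜ a)))

/-- The relations defining `V ⊗_A V` (on top of base relations `R₀` defining the coring
module as a quotient of `V`). -/
def corRel (R₀ : Submodule k V) (χ : V ≃ₗ[k] V)
    (lact : A →ₗ[k] V →ₗ[k] V) (ract : V →ₗ[k] A →ₗ[k] V) : Submodule k (V ⊗[k] V) :=
  Submodule.span k
    ({x | ∃ v a w, x = ract v a ⊗ₜ w - χ v ⊗ₜ lact a (χ.symm w)} ∪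
     {x | ∃ r w, r ∈ R₀ ∧ (x = r ⊗ₜ w ∨ x = w ⊗ₜ r)})

/-- Induced left A-action on `V ⊗_A V` (on representatives). -/
noncomputable def lact2 (α : A ≃ₗ[k] A) (χ : V ≃ₗ[k] V) (lact : A →ₗ[k] V →ₗ[k] V) (a : A) :
    V ⊗[k] V →ₗ[k] V ⊗[k] V :=
  TensorProduct.map (lact (α.symm a)) χ.toLinearMap

/-- Induced right A-action on `V ⊗_A V` (on representatives). -/
noncomputable def ract2 (α : A ≃ₗ[k] A) (χ : V ≃ₗ[k] V) (ract : V →ₗ[k] A →ₗ[k] V) (a : A) :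
    V ⊗[k] V →ₗ[k] V ⊗[k] V :=
  TensorProduct.map χ.toLinearMap (ract.flip (α.symm a))

/-- The relations defining `V ⊗_A (V ⊗_A V)`. -/
def corRel3 (R₀ : Submodule k V) (α : A ≃ₗ[k] A) (χ : V ≃ₗ[k] V)
    (lact : A →ₗ[k] V →ₗ[k] V) (ract : V →ₗ[k] A →ₗ[k] V) :
    Submodule k (V ⊗[k] (V ⊗[k] V)) :=
  Submodule.span k
    ({x | ∃ v a w, x = ract v a ⊗ₜ w - χ v ⊗ₜ lact2 α χ lact a w} ∪
     {x | ∃ v w, w ∈ corRel R₀ χ lact ract ∧ x = v ⊗ₜ w} ∪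
     {x | ∃ r w, r ∈ R₀ ∧ x = r ⊗ₜ w})

/-- `(V,χ)` (modulo the relations `R₀`) together with the A-bimodule structure
`lact`, `ract`, comultiplication representative `Δ` and counit `ε` is an
`(A,α)`-Hom-coring: all axioms are stated on representatives, under the quotient
projections by `R₀` resp. the tensor-relation submodules. -/
def IsHomCoring (α : A ≃ₗ[k] A) (mul : A →ₗ[k] A →ₗ[k] A) (one : A)
    (χ : V ≃ₗ[k] V) (lact : A →ₗ[k] V →ₗ[k] V) (ract : V →ₗ[k] A →ₗ[k] V)
    (R₀ : Submodule k V) (Δ : V →ₗ[k] V ⊗[k] V) (ε : V →ₗ[k] A) : Prop :=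
  -- (V,χ) is an (A,α)-Hom-bimodule
  (∀ a b v, Submodule.Quotient.mk (p := R₀) (lact (mul a b) (χ v))
      = Submodule.Quotient.mk (p := R₀) (lact (α a) (lact b v))) ∧
  (∀ v, Submodule.Quotient.mk (p := R₀) (lact one v) = Submodule.Quotient.mk (p := R₀) (χ v)) ∧
  (∀ v a b, Submodule.Quotient.mk (p := R₀) (ract (χ v) (mul a b))
      = Submodule.Quotient.mk (p := R₀) (ract (ract v a) (α b))) ∧
  (∀ v, Submodule.Quotient.mk (p := R₀) (ract v one) = Submodule.Quotient.mk (p := R₀) (χ v)) ∧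
  (∀ a v b, Submodule.Quotient.mk (p := R₀) (ract (lact a v) (α b))
      = Submodule.Quotient.mk (p := R₀) (lact (α a) (ract v b))) ∧
  (∀ a v, Submodule.Quotient.mk (p := R₀) (χ (lact a v))
      = Submodule.Quotient.mk (p := R₀) (lact (α a) (χ v))) ∧
  (∀ v a, Submodule.Quotient.mk (p := R₀) (χ (ract v a))
      = Submodule.Quotient.mk (p := R₀) (ract (χ v) (α a))) ∧
  (∀ r ∈ R₀, χ r ∈ R₀) ∧
  -- Δ and ε are well defined on the quotient by R₀
  (∀ r ∈ R₀, Submodule.Quotient.mk (p := corRel R₀ χ lact ract) (Δ r) = 0) ∧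
  (∀ r ∈ R₀, ε r = 0) ∧
  -- A-bilinearity of Δ
  (∀ a v, Submodule.Quotient.mk (p := corRel R₀ χ lact ract) (Δ (lact a v))
      = Submodule.Quotient.mk (p := corRel R₀ χ lact ract) (lact2 α χ lact a (Δ v))) ∧
  (∀ v a, Submodule.Quotient.mk (p := corRel R₀ χ lact ract) (Δ (ract v a))
      = Submodule.Quotient.mk (p := corRel R₀ χ lact ract) (ract2 α χ ract a (Δ v))) ∧
  -- A-bilinearity of ε
  (∀ a v, ε (lact a v) = mul a (ε v)) ∧
  (∀ v a, ε (ract v a) = mul (ε v) a) ∧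
  -- Hom-coassociativity: χ⁻¹(c₁) ⊗ Δ(c₂) = c₁₁ ⊗ (c₁₂ ⊗ χ⁻¹(c₂))
  (∀ v, Submodule.Quotient.mk (p := corRel3 R₀ α χ lact ract)
        (TensorProduct.map χ.symm.toLinearMap Δ (Δ v))
      = Submodule.Quotient.mk (p := corRel3 R₀ α χ lact ract)
        (TensorProduct.assoc k V V V (TensorProduct.map Δ χ.symm.toLinearMap (Δ v)))) ∧
  -- counity: ε(c₁)c₂ = c = c₁ε(c₂)
  (∀ v, Submodule.Quotient.mk (p := R₀) (TensorProduct.lift (lact ∘ₗ ε) (Δ v))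
      = Submodule.Quotient.mk (p := R₀) v) ∧
  (∀ v, Submodule.Quotient.mk (p := R₀) (TensorProduct.lift (ract.compl₂ ε) (Δ v))
      = Submodule.Quotient.mk (p := R₀) v) ∧
  -- compatibility with the twisting maps
  (∀ v, Submodule.Quotient.mk (p := corRel R₀ χ lact ract) (Δ (χ v))
      = Submodule.Quotient.mk (p := corRel R₀ χ lact ract)
        (TensorProduct.map χ.toLinearMap χ.toLinearMap (Δ v))) ∧
  (∀ v, ε (χ v) = α (ε v))

end HomPaper

namespace HomPaper

variable {k A B C M : Type*} [CommRing k]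
variable [AddCommGroup A] [Module k A] [AddCommGroup B] [Module k B]
variable [AddCommGroup C] [Module k C] [AddCommGroup M] [Module k M]

/-- Monoidal Hom-bialgebra axioms. -/
def IsHomBialgebra (β : B ≃ₗ[k] B) (mul : B →ₗ[k] B →ₗ[k] B) (one : B)
    (Δ : B →ₗ[k] B ⊗[k] B) (ε : B →ₗ[k] k) : Prop :=
  IsHomAlgebra β mul one ∧ IsHomCoalgebra β Δ ε ∧
  (∀ b b', Δ (mul b b')
      = (TensorProduct.map (TensorProduct.lift mul) (TensorProduct.lift mul))
          (TensorProduct.tensorTensorTensorComm k B B B B (Δ b ⊗ₜ Δ b'))) ∧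
  Δ one = one ⊗ₜ one ∧
  (∀ b b', ε (mul b b') = ε b * ε b') ∧ ε one = 1

/-- `(A,α)` is a right `(B,β)`-Hom-comodule algebra with coaction `ρ`. -/
def IsHomComoduleAlgebra (β : B ≃ₗ[k] B) (mulB : B →ₗ[k] B →ₗ[k] B)
    (ΔB : B →ₗ[k] B ⊗[k] B) (εB : B →ₗ[k] k)
    (α : A ≃ₗ[k] A) (mulA : A →ₗ[k] A →ₗ[k] A) (oneA : A) (oneB : B)
    (ρ : A →ₗ[k] A ⊗[k] B) : Prop :=
  -- Hom-comodule axioms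
  (∀ a, TensorProduct.map α.symm.toLinearMap ΔB (ρ a)
      = TensorProduct.assoc k A B B (TensorProduct.map ρ β.symm.toLinearMap (ρ a))) ∧
  (∀ a, TensorProduct.rid k A (TensorProduct.map LinearMap.id εB (ρ a)) = α.symm a) ∧
  (∀ a, ρ (α a) = TensorProduct.map α.toLinearMap β.toLinearMap (ρ a)) ∧
  -- ρ is a morphism of Hom-algebras
  (∀ a a', ρ (mulA a a')
      = (TensorProduct.map (TensorProduct.lift mulA) (TensorProduct.lift mulB))
          (TensorProduct.tensorTensorTensorComm k A B A B (ρ a ⊗ₜ ρ a'))) ∧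
  ρ oneA = oneA ⊗ₜ oneB

/-- `(C,γ)` is a right `(B,β)`-Hom-module coalgebra with action `act`. -/
def IsHomModuleCoalgebra (β : B ≃ₗ[k] B) (mulB : B →ₗ[k] B →ₗ[k] B) (oneB : B)
    (ΔB : B →ₗ[k] B ⊗[k] B) (εB : B →ₗ[k] k)
    (γ : C ≃ₗ[k] C) (ΔC : C →ₗ[k] C ⊗[k] C) (εC : C →ₗ[k] k)
    (act : C →ₗ[k] B →ₗ[k] C) : Prop :=
  -- Hom-module axioms
  (∀ c b b', act (γ c) (mulB b b') = act (act c b) (β b')) ∧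
  (∀ c, act c oneB = γ c) ∧
  (∀ c b, γ (act c b) = act (γ c) (β b)) ∧
  -- the action is a morphism of Hom-coalgebras
  (∀ c b, ΔC (act c b)
      = (TensorProduct.map (TensorProduct.lift act) (TensorProduct.lift act))
          (TensorProduct.tensorTensorTensorComm k C C B B (ΔC c ⊗ₜ ΔB b))) ∧
  (∀ c b, εC (act c b) = εC c * εB b)

/-- The entwining map of a Hom-Doi-Koppinen datum:
`ψ(c⊗a) = α(a₍₀₎) ⊗ γ⁻¹(c)·a₍₁₎`. -/
noncomputable def dkEntwining (α : A ≃ₗ[k] A) (γ : C ≃ₗ[k] C)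
    (ρA : A →ₗ[k] A ⊗[k] B) (actC : C →ₗ[k] B →ₗ[k] C) :
    C ⊗[k] A →ₗ[k] A ⊗[k] C :=
  (TensorProduct.map α.toLinearMap
      ((TensorProduct.lift actC) ∘ₗ (TensorProduct.map γ.symm.toLinearMap LinearMap.id))) ∘ₗ
    (TensorProduct.leftComm k C A B).toLinearMap ∘ₗ
      (TensorProduct.map LinearMap.id ρA)
end HomPaper
namespace HomPaper

/-- Monoidal Hom-Hopf algebra axioms: a monoidal Hom-bialgebra with an antipode. -/
def IsHomHopfAlgebra {k H : Type*} [CommRing k] [AddCommGroup H] [Module k H]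
    (α : H ≃ₗ[k] H) (mul : H →ₗ[k] H →ₗ[k] H) (one : H)
    (Δ : H →ₗ[k] H ⊗[k] H) (ε : H →ₗ[k] k) (S : H →ₗ[k] H) : Prop :=
  IsHomBialgebra α mul one Δ ε ∧
  (∀ h, S (α h) = α (S h)) ∧
  (∀ h, TensorProduct.lift mul (TensorProduct.map S LinearMap.id (Δ h)) = ε h • one) ∧
  (∀ h, TensorProduct.lift mul (TensorProduct.map LinearMap.id S (Δ h)) = ε h • one)

section OpTensor

variable {k H : Type*} [CommRing k] [AddCommGroup H] [Module k H]

/-- The multiplication of `H^op ⊗ H`: `(h⊗k)(h'⊗k') = h'h ⊗ kk'`. -/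
noncomputable def opTensorMul (mul : H →ₗ[k] H →ₗ[k] H) :
    (H ⊗[k] H) →ₗ[k] (H ⊗[k] H) →ₗ[k] H ⊗[k] H :=
  TensorProduct.curry
    ((TensorProduct.map (TensorProduct.lift mul.flip) (TensorProduct.lift mul)) ∘ₗ
      (TensorProduct.tensorTensorTensorComm k H H H H).toLinearMap)

/-- The comultiplication of `H^op ⊗ H`: `(h⊗k) ↦ (h₁⊗k₁) ⊗ (h₂⊗k₂)`. -/
noncomputable def opTensorComul (Δ : H →ₗ[k] H ⊗[k] H) :
    (H ⊗[k] H) →ₗ[k] (H ⊗[k] H) ⊗[k] (H ⊗[k] H) :=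
  (TensorProduct.tensorTensorTensorComm k H H H H).toLinearMap ∘ₗ
    TensorProduct.map Δ Δ

/-- The counit of `H^op ⊗ H`: `(h⊗k) ↦ ε(h)ε(k)`. -/
noncomputable def opTensorCounit (ε : H →ₗ[k] k) : (H ⊗[k] H) →ₗ[k] k :=
  (TensorProduct.lid k k).toLinearMap ∘ₗ TensorProduct.map ε ε

end OpTensor

/-!
The product `a * b = α⁻¹(ab)` and the coproduct `h ↦ Δ(α(h))` turn a Hom-Hopf algebra into an
ordinary Hopf algebra with the same antipode `S`. There `h ↦ h₂ ⊗ (S(h₁) ⊗ h₃)` is a coaction of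
`H^op ⊗ H` by coassociativity and because `S` reverses products and coproducts. Precomposing this
coaction with `α⁻¹` makes it a Hom-coaction for the twisted structures, and pushing it forward
along the automorphism `α⁻¹ ⊗ α⁻¹` of `H^op ⊗ H` yields the coaction `ρ` of the theorem.
-/

section Antipode

open Coalgebra HopfAlgebra LinearMap WithConv
open Algebra.TensorProduct (includeLeft includeRight)

variable {R A : Type*} [CommSemiring R] [Semiring A] [HopfAlgebra R A]

theorem algHom_comp_antipode_convMul {B : Type*} [Semiring B] [Algebra R B] (f : A →ₐ[R] B) :
    toConv (f.toLinearMap ∘ₗ antipode R) * toConv f.toLinearMap = 1 := by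
  have h := algHom_comp_convMul_distrib f (toConv (antipode R (A := A))) (toConv id)
  rw [antipode_mul_id] at h
  ext a
  simpa using (LinearMap.congr_fun h a).symm

local notation "ι₁" => AlgHom.toLinearMap (includeLeft : A →ₐ[R] A ⊗[R] A)
local notation "ι₂" => AlgHom.toLinearMap (includeRight : A →ₐ[R] A ⊗[R] A)

theorem comul_eq_includeLeft_convMul_includeRight :
    toConv (comul (R := R) (A := A)) = toConv ι₁ * toConv ι₂ := by
  have h : mul' R (A ⊗[R] A) ∘ₗ TensorProduct.map ι₁ ι₂ = .id := by ext; simp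
  exact (congrArg (fun f ↦ toConv (f ∘ₗ comul)) h).symm

theorem map_antipode_comm_comul_eq_convMul :
    toConv (TensorProduct.map (antipode R) (antipode R) ∘ₗ
      (TensorProduct.comm R A A).toLinearMap ∘ₗ comul) =
      toConv (ι₂ ∘ₗ antipode R) * toConv (ι₁ ∘ₗ antipode R) := by
  have h : mul' R (A ⊗[R] A) ∘ₗ TensorProduct.map (ι₂ ∘ₗ antipode R) (ι₁ ∘ₗ antipode R) =
      TensorProduct.map (antipode R) (antipode R) ∘ₗ (TensorProduct.comm R A A).toLinearMap := by
    ext; simp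
  exact (congrArg (fun f ↦ toConv (f ∘ₗ comul)) h).symm

theorem comul_comp_antipode :
    comul ∘ₗ antipode R (A := A) =
      TensorProduct.map (antipode R) (antipode R) ∘ₗ
        (TensorProduct.comm R A A).toLinearMap ∘ₗ comul := by
  refine toConv_injective (left_inv_eq_right_inv ?_ comul_right_inv).symm
  rw [map_antipode_comm_comul_eq_convMul, comul_eq_includeLeft_convMul_includeRight, mul_assoc,
    ← mul_assoc (toConv (ι₁ ∘ₗ antipode R)), algHom_comp_antipode_convMul, one_mul,
    algHom_comp_antipode_convMul]

end Antipode

section HopfCoaction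

open Coalgebra HopfAlgebra LinearMap

variable (k H : Type*) [CommRing k] [Ring H] [HopfAlgebra k H]

/-- The map `a ⊗ (b ⊗ c) ↦ b ⊗ (S(a) ⊗ c)`, which turns the twofold coproduct into the
coaction `hopfCoact`. -/
noncomputable def antipodeLeftComm (V : Type*) [AddCommGroup V] [Module k V] :
    H ⊗[k] (V ⊗[k] H) →ₗ[k] V ⊗[k] (H ⊗[k] H) :=
  (TensorProduct.leftComm k H V H).toLinearMap ∘ₗ rTensor (V ⊗[k] H) (antipode k)

/-- The coaction `h ↦ h₂ ⊗ (S(h₁) ⊗ h₃)` of `H^op ⊗ H` on a Hopf algebra `H`. -/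
noncomputable def hopfCoact : H →ₗ[k] H ⊗[k] (H ⊗[k] H) :=
  antipodeLeftComm k H H ∘ₗ lTensor H comul ∘ₗ comul

/-- The map `(a ⊗ b) ⊗ (c ⊗ (d ⊗ e)) ↦ c ⊗ ((S(b) ⊗ d) ⊗ (S(a) ⊗ e))`, which turns the fourfold
coproduct into the iterated coaction. -/
noncomputable def coactShuffle :
    (H ⊗[k] H) ⊗[k] (H ⊗[k] (H ⊗[k] H)) →ₗ[k] H ⊗[k] ((H ⊗[k] H) ⊗[k] (H ⊗[k] H)) :=
  lTensor H ((TensorProduct.tensorTensorTensorComm k H H H H).toLinearMap ∘ₗ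
      rTensor (H ⊗[k] H) (TensorProduct.map (antipode k) (antipode k) ∘ₗ
        (TensorProduct.comm k H H).toLinearMap)) ∘ₗ
    (TensorProduct.leftComm k (H ⊗[k] H) H (H ⊗[k] H)).toLinearMap

variable {k H}

theorem lTensor_opTensorComul_comp_hopfCoact :
    lTensor H (opTensorComul comul) ∘ₗ hopfCoact k H =
      coactShuffle k H ∘ₗ TensorProduct.map comul (lTensor H comul ∘ₗ comul) ∘ₗ comul := by
  have shuffle : lTensor H (opTensorComul comul) ∘ₗ antipodeLeftComm k H H =
      coactShuffle k H ∘ₗ TensorProduct.map comul (lTensor H comul) := by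
    ext a b c
    simp [opTensorComul, coactShuffle, antipodeLeftComm,
      show comul (antipode k a) = _ from LinearMap.congr_fun comul_comp_antipode a]
  rw [hopfCoact, ← comp_assoc, shuffle, comp_assoc, ← map_comp_lTensor, comp_assoc]

theorem assoc_rTensor_hopfCoact_comp_hopfCoact :
    (TensorProduct.assoc k H (H ⊗[k] H) (H ⊗[k] H)).toLinearMap ∘ₗ
      rTensor (H ⊗[k] H) (hopfCoact k H) ∘ₗ hopfCoact k H =
      coactShuffle k H ∘ₗ TensorProduct.map comul (lTensor H comul ∘ₗ comul) ∘ₗ comul := by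
  let reassoc : H ⊗[k] ((H ⊗[k] (H ⊗[k] H)) ⊗[k] H) →ₗ[k] (H ⊗[k] H) ⊗[k] (H ⊗[k] (H ⊗[k] H)) :=
    (TensorProduct.assoc k H H (H ⊗[k] (H ⊗[k] H))).symm.toLinearMap ∘ₗ
      lTensor H (lTensor H (TensorProduct.assoc k H H H).toLinearMap ∘ₗ
        (TensorProduct.assoc k H (H ⊗[k] H) H).toLinearMap)
  have shuffle : (TensorProduct.assoc k H (H ⊗[k] H) (H ⊗[k] H)).toLinearMap ∘ₗ
      rTensor (H ⊗[k] H) (antipodeLeftComm k H H) ∘ₗ antipodeLeftComm k H _ =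
        coactShuffle k H ∘ₗ reassoc := by
    ext a b c d e
    simp [coactShuffle, antipodeLeftComm, reassoc]
  have slide (f : H →ₗ[k] H ⊗[k] (H ⊗[k] H)) :
      rTensor (H ⊗[k] H) f ∘ₗ antipodeLeftComm k H H =
        antipodeLeftComm k H _ ∘ₗ lTensor H (rTensor H f) := by
    ext; simp [antipodeLeftComm]
  have coassoc : reassoc ∘ₗ lTensor H (rTensor H (lTensor H comul ∘ₗ comul) ∘ₗ comul) ∘ₗ comul =
      TensorProduct.map comul (lTensor H comul ∘ₗ comul) ∘ₗ comul := by
    simp [coassoc_simps, reassoc]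
  calc _ = ((TensorProduct.assoc k H (H ⊗[k] H) (H ⊗[k] H)).toLinearMap ∘ₗ
          rTensor (H ⊗[k] H) (antipodeLeftComm k H H)) ∘ₗ
        (rTensor (H ⊗[k] H) (lTensor H comul ∘ₗ comul) ∘ₗ antipodeLeftComm k H H) ∘ₗ
          lTensor H comul ∘ₗ comul := by
        simp only [hopfCoact, rTensor_comp, comp_assoc]
    _ = _ := by
        rw [slide, ← coassoc, lTensor_comp]
        simp only [← comp_assoc] at shuffle ⊢
        rw [shuffle]

theorem hopfCoact_coassoc :
    lTensor H (opTensorComul comul) ∘ₗ hopfCoact k H =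
      (TensorProduct.assoc k H (H ⊗[k] H) (H ⊗[k] H)).toLinearMap ∘ₗ
        rTensor (H ⊗[k] H) (hopfCoact k H) ∘ₗ hopfCoact k H :=
  lTensor_opTensorComul_comp_hopfCoact.trans assoc_rTensor_hopfCoact_comp_hopfCoact.symm

theorem rid_lTensor_counit_comp_hopfCoact :
    (TensorProduct.rid k H).toLinearMap ∘ₗ lTensor H (opTensorCounit counit) ∘ₗ hopfCoact k H =
      .id := by
  have contract : (TensorProduct.rid k H).toLinearMap ∘ₗ lTensor H (opTensorCounit counit) ∘ₗ
      antipodeLeftComm k H H = (TensorProduct.lid k H).toLinearMap ∘ₗ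
        TensorProduct.map counit ((TensorProduct.rid k H).toLinearMap ∘ₗ lTensor H counit) := by
    ext a b c
    simp [antipodeLeftComm, opTensorCounit, mul_smul, smul_comm (counit (R := k) a)]
  calc _ = ((TensorProduct.rid k H).toLinearMap ∘ₗ lTensor H (opTensorCounit counit) ∘ₗ
        antipodeLeftComm k H H) ∘ₗ lTensor H comul ∘ₗ comul := rfl
    _ = (TensorProduct.lid k H).toLinearMap ∘ₗ TensorProduct.map counit
        ((TensorProduct.rid k H).toLinearMap ∘ₗ lTensor H counit ∘ₗ comul) ∘ₗ comul := by
      rw [contract, comp_assoc, ← comp_assoc comul, map_comp_lTensor, comp_assoc]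
    _ = .id := by
      have counit_right : (TensorProduct.rid k H).toLinearMap ∘ₗ lTensor H counit ∘ₗ comul =
          .id := by ext; simp
      rw [counit_right]
      ext; simp [← rTensor_def]

theorem hopfCoact_mul (g h : H) :
    hopfCoact k H (g * h) =
      TensorProduct.map (lift (LinearMap.mul k H)) (lift (opTensorMul (LinearMap.mul k H)))
        (TensorProduct.tensorTensorTensorComm k H (H ⊗[k] H) H (H ⊗[k] H)
          (hopfCoact k H g ⊗ₜ hopfCoact k H h)) := by
  have antipodeLeftComm_mul : (LinearMap.mul k _).compr₂ (antipodeLeftComm k H H) =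
      (curry (TensorProduct.map (lift (LinearMap.mul k H))
        (lift (opTensorMul (LinearMap.mul k H))) ∘ₗ
          (TensorProduct.tensorTensorTensorComm k H (H ⊗[k] H) H (H ⊗[k] H)).toLinearMap)).compl₁₂
        (antipodeLeftComm k H H) (antipodeLeftComm k H H) := by
    ext a b c x y z
    simp [antipodeLeftComm, opTensorMul, antipode_mul_antidistrib]
  have comul₃_mul : lTensor H comul (comul (R := k) (g * h)) =
      lTensor H comul (comul (R := k) g) * lTensor H comul (comul (R := k) h) := by
    rw [Bialgebra.comul_mul]
    exact map_mul (Algebra.TensorProduct.map (.id k H) (Bialgebra.comulAlgHom k H)) _ _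
  simp only [hopfCoact, comp_apply, comul₃_mul]
  exact LinearMap.congr_fun₂ antipodeLeftComm_mul _ _

theorem hopfCoact_one : hopfCoact k H 1 = 1 ⊗ₜ (1 ⊗ₜ 1) := by
  simp [hopfCoact, antipodeLeftComm, Algebra.TensorProduct.one_def]

theorem hopfCoact_comp {f : H →ₗ[k] H} (hf : comul ∘ₗ f = TensorProduct.map f f ∘ₗ comul)
    (hS : antipode k ∘ₗ f = f ∘ₗ antipode k) :
    hopfCoact k H ∘ₗ f = TensorProduct.map f (TensorProduct.map f f) ∘ₗ hopfCoact k H := by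
  have antipodeLeftComm_map :
      antipodeLeftComm k H H ∘ₗ TensorProduct.map f (TensorProduct.map f f) =
        TensorProduct.map f (TensorProduct.map f f) ∘ₗ antipodeLeftComm k H H := by
    ext a
    simp [antipodeLeftComm, show antipode k (f a) = _ from LinearMap.congr_fun hS a]
  have comul₃_comp : lTensor H comul ∘ₗ comul ∘ₗ f =
      TensorProduct.map f (TensorProduct.map f f) ∘ₗ lTensor H comul ∘ₗ comul := by
    rw [hf, ← comp_assoc, ← comp_assoc, lTensor_comp_map, map_comp_lTensor, hf]
  rw [hopfCoact, comp_assoc, comp_assoc, comul₃_comp, ← comp_assoc, antipodeLeftComm_map,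
    comp_assoc]

theorem isHomComoduleAlgebra_hopfCoact :
    IsHomComoduleAlgebra (.refl k (H ⊗[k] H)) (opTensorMul (LinearMap.mul k H))
      (opTensorComul comul) (opTensorCounit counit) (.refl k H) (LinearMap.mul k H) 1 (1 ⊗ₜ 1)
      (hopfCoact k H) :=
  ⟨LinearMap.congr_fun hopfCoact_coassoc, LinearMap.congr_fun rid_lTensor_counit_comp_hopfCoact,
    fun a ↦ by simp, hopfCoact_mul, hopfCoact_one⟩

end HopfCoaction

section Twist

open LinearMap

variable {k A B : Type*} [CommRing k] [AddCommGroup A] [Module k A] [AddCommGroup B] [Module k B]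
  {mulB : B →ₗ[k] B →ₗ[k] B} {ΔB : B →ₗ[k] B ⊗[k] B} {εB : B →ₗ[k] k}
  {mulA : A →ₗ[k] A →ₗ[k] A} {oneA : A} {oneB : B} {ρ : A →ₗ[k] A ⊗[k] B}

theorem map_lift_tensorTensorTensorComm_map {A' B' : Type*} [AddCommGroup A'] [Module k A']
    [AddCommGroup B'] [Module k B']
    {mulA' : A' →ₗ[k] A' →ₗ[k] A'} {mulB' : B' →ₗ[k] B' →ₗ[k] B'}
    {f : A →ₗ[k] A'} {g : B →ₗ[k] B'} (hf : ∀ a a', f (mulA a a') = mulA' (f a) (f a'))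
    (hg : ∀ b b', g (mulB b b') = mulB' (g b) (g b')) (x y : A ⊗[k] B) :
    TensorProduct.map f g (TensorProduct.map (lift mulA) (lift mulB)
        (TensorProduct.tensorTensorTensorComm k A B A B (x ⊗ₜ y))) =
      TensorProduct.map (lift mulA') (lift mulB')
        (TensorProduct.tensorTensorTensorComm k A' B' A' B'
          (TensorProduct.map f g x ⊗ₜ TensorProduct.map f g y)) := by
  have h : TensorProduct.map f g ∘ₗ TensorProduct.map (lift mulA) (lift mulB) ∘ₗ
      (TensorProduct.tensorTensorTensorComm k A B A B).toLinearMap =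
    TensorProduct.map (lift mulA') (lift mulB') ∘ₗ
      (TensorProduct.tensorTensorTensorComm k A' B' A' B').toLinearMap ∘ₗ
        TensorProduct.map (TensorProduct.map f g) (TensorProduct.map f g) := by
    ext; simp [hf, hg]
  exact LinearMap.congr_fun h (x ⊗ₜ y)

theorem IsHomComoduleAlgebra.map {B' : Type*} [AddCommGroup B'] [Module k B']
    {β : B ≃ₗ[k] B} {α : A ≃ₗ[k] A}
    (h : IsHomComoduleAlgebra β mulB ΔB εB α mulA oneA oneB ρ)
    {β' : B' ≃ₗ[k] B'} {mulB' : B' →ₗ[k] B' →ₗ[k] B'} {ΔB' : B' →ₗ[k] B' ⊗[k] B'}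
    {εB' : B' →ₗ[k] k} {f : B →ₗ[k] B'} (hβ : f ∘ₗ β.toLinearMap = β'.toLinearMap ∘ₗ f)
    (hmul : ∀ b b', f (mulB b b') = mulB' (f b) (f b'))
    (hΔ : ΔB' ∘ₗ f = TensorProduct.map f f ∘ₗ ΔB) (hε : εB' ∘ₗ f = εB) :
    IsHomComoduleAlgebra β' mulB' ΔB' εB' α mulA oneA (f oneB) (lTensor A f ∘ₗ ρ) := by
  obtain ⟨hcoassoc, hcounit, hα, hρmul, hρone⟩ := h
  have hβ' : β'.symm.toLinearMap ∘ₗ f = f ∘ₗ β.symm.toLinearMap := by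
    rw [LinearEquiv.toLinearMap_symm_comp_eq, ← comp_assoc, ← hβ, comp_assoc]; simp
  refine ⟨fun a ↦ ?_, fun a ↦ ?_, fun a ↦ ?_, fun a a' ↦ ?_, ?_⟩
  · have hl : TensorProduct.map α.symm.toLinearMap ΔB' ∘ₗ lTensor A f =
        lTensor A (TensorProduct.map f f) ∘ₗ TensorProduct.map α.symm.toLinearMap ΔB := by
      rw [map_comp_lTensor, hΔ, lTensor_comp_map]
    have hr : TensorProduct.map (lTensor A f ∘ₗ ρ) β'.symm.toLinearMap ∘ₗ lTensor A f =
        TensorProduct.map (lTensor A f) f ∘ₗ TensorProduct.map ρ β.symm.toLinearMap := by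
      rw [map_comp_lTensor, hβ', TensorProduct.map_comp]
    rw [comp_apply, ← comp_apply, hl, ← comp_apply (TensorProduct.map _ _), hr, comp_apply,
      comp_apply, hcoassoc, lTensor, TensorProduct.map_map_assoc, lTensor]
  · rw [comp_apply, ← hcounit, ← comp_apply, ← lTensor_def, ← lTensor_comp, hε, lTensor_def]
  · rw [comp_apply, hα, ← comp_apply, lTensor_comp_map, hβ, ← map_comp_lTensor, comp_apply,
      comp_apply]
  · rw [comp_apply, hρmul]
    exact map_lift_tensorTensorTensorComm_map (fun _ _ ↦ rfl) hmul _ _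
  · simp [hρone]

theorem IsHomComoduleAlgebra.twist
    (h : IsHomComoduleAlgebra (.refl k B) mulB ΔB εB (.refl k A) mulA oneA oneB ρ)
    {α : A ≃ₗ[k] A} {β : B ≃ₗ[k] B}
    (hmul : ∀ a a', α (mulA a a') = mulA (α a) (α a')) (hone : α oneA = oneA)
    (hρ : ∀ a, ρ (α a) = TensorProduct.map α.toLinearMap β.toLinearMap (ρ a)) :
    IsHomComoduleAlgebra β (mulB.compr₂ β.toLinearMap) (ΔB ∘ₗ β.symm.toLinearMap) εB
      α (mulA.compr₂ α.toLinearMap) oneA oneB (ρ ∘ₗ α.symm.toLinearMap) := by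
  obtain ⟨hcoassoc, hcounit, -, hρmul, hρone⟩ := h
  have hρ' (a : A) : ρ (α.symm a) =
      TensorProduct.map α.symm.toLinearMap β.symm.toLinearMap (ρ a) := by
    conv_rhs => rw [← α.apply_symm_apply a, hρ, TensorProduct.map_map]
    simp
  refine ⟨fun a ↦ ?_, fun a ↦ hcounit _, fun a ↦ ?_, fun a a' ↦ ?_, ?_⟩
  · simp only [comp_apply, LinearEquiv.coe_coe]
    rw [← lTensor_comp_map, ← rTensor_comp_map, comp_apply, comp_apply, ← hρ']
    exact hcoassoc _
  · simp only [comp_apply, LinearEquiv.coe_coe]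
    rw [← hρ, α.symm_apply_apply, α.apply_symm_apply]
  · calc
      ρ (α.symm (α (mulA a a'))) = ρ (α (mulA (α.symm a) (α.symm a'))) := by
          rw [α.symm_apply_apply, hmul, α.apply_symm_apply, α.apply_symm_apply]
      _ = _ := by
          rw [hρ, hρmul, ← comp_apply, ← TensorProduct.map_comp, ← lift_compr₂, ← lift_compr₂]
          rfl
  · rw [comp_apply, LinearEquiv.coe_coe, α.symm_apply_eq.mpr hone.symm, hρone]

end Twist

section OpTensorFunctoriality

open LinearMap

variable {k H K : Type*} [CommRing k] [AddCommGroup H] [Module k H] [AddCommGroup K] [Module k K]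

theorem opTensorMul_compr₂ (mul : H →ₗ[k] H →ₗ[k] H) (f : H →ₗ[k] H) :
    opTensorMul (mul.compr₂ f) = (opTensorMul mul).compr₂ (TensorProduct.map f f) := by
  ext; simp [opTensorMul]

theorem opTensorComul_comp (Δ : H →ₗ[k] H ⊗[k] H) (f : H →ₗ[k] H) :
    opTensorComul (Δ ∘ₗ f) = opTensorComul Δ ∘ₗ TensorProduct.map f f := by
  rw [opTensorComul, TensorProduct.map_comp, ← comp_assoc, opTensorComul]

theorem map_opTensorMul {mul : H →ₗ[k] H →ₗ[k] H} {mul' : K →ₗ[k] K →ₗ[k] K} {f : H →ₗ[k] K}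
    (hf : ∀ a b, f (mul a b) = mul' (f a) (f b)) (x y : H ⊗[k] H) :
    TensorProduct.map f f (opTensorMul mul x y) =
      opTensorMul mul' (TensorProduct.map f f x) (TensorProduct.map f f y) :=
  map_lift_tensorTensorTensorComm_map (mulA := mul.flip) (mulA' := mul'.flip)
    (fun a b ↦ hf b a) hf x y

theorem opTensorComul_comp_map {Δ : H →ₗ[k] H ⊗[k] H} {Δ' : K →ₗ[k] K ⊗[k] K} {f : H →ₗ[k] K}
    (hf : Δ' ∘ₗ f = TensorProduct.map f f ∘ₗ Δ) :
    opTensorComul Δ' ∘ₗ TensorProduct.map f f =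
      TensorProduct.map (TensorProduct.map f f) (TensorProduct.map f f) ∘ₗ opTensorComul Δ := by
  rw [opTensorComul, comp_assoc, ← TensorProduct.map_comp, hf, TensorProduct.map_comp,
    ← comp_assoc, TensorProduct.tensorTensorTensorComm_comp_map, comp_assoc, opTensorComul]

theorem opTensorCounit_comp_map {ε : H →ₗ[k] k} {ε' : K →ₗ[k] k} {f : H →ₗ[k] K}
    (hf : ε' ∘ₗ f = ε) : opTensorCounit ε' ∘ₗ TensorProduct.map f f = opTensorCounit ε := by
  rw [opTensorCounit, comp_assoc, ← TensorProduct.map_comp, hf, opTensorCounit]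

end OpTensorFunctoriality

section HopfTwist

open Coalgebra HopfAlgebra LinearMap

variable {k H : Type*} [CommRing k] [Ring H] [HopfAlgebra k H]

theorem lTensor_map_symm_comp_hopfCoact_comp_symm {α : H ≃ₗ[k] H}
    (hΔ : comul ∘ₗ α.symm.toLinearMap =
      TensorProduct.map α.symm.toLinearMap α.symm.toLinearMap ∘ₗ comul) :
    lTensor H (TensorProduct.map α.symm.toLinearMap α.symm.toLinearMap) ∘ₗ
        hopfCoact k H ∘ₗ α.symm.toLinearMap =
      TensorProduct.map α.toLinearMap (TensorProduct.map α.symm.toLinearMap .id) ∘ₗ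
        (TensorProduct.leftComm k H H H).toLinearMap ∘ₗ
          TensorProduct.map (antipode k) (comul ∘ₗ α.symm.toLinearMap) ∘ₗ
            comul ∘ₗ α.symm.toLinearMap := by
  have cancel : lTensor H (TensorProduct.map α.symm.toLinearMap α.symm.toLinearMap) ∘ₗ
      antipodeLeftComm k H H =
        TensorProduct.map α.toLinearMap (TensorProduct.map α.symm.toLinearMap .id) ∘ₗ
          (TensorProduct.leftComm k H H H).toLinearMap ∘ₗ TensorProduct.map (antipode k)
            (TensorProduct.map α.symm.toLinearMap α.symm.toLinearMap) := by
    ext; simp [antipodeLeftComm]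
  have split : TensorProduct.map (antipode k) (comul ∘ₗ α.symm.toLinearMap) =
      TensorProduct.map (antipode k)
        (TensorProduct.map α.symm.toLinearMap α.symm.toLinearMap) ∘ₗ lTensor H comul := by
    rw [hΔ, map_comp_lTensor]
  rw [split, hopfCoact, ← comp_assoc, ← comp_assoc, cancel]
  simp only [comp_assoc]

theorem isHomComoduleAlgebra_twist_hopfCoact {α : H ≃ₗ[k] H} (hmul : ∀ a b, α (a * b) = α a * α b)
    (hone : α 1 = 1)
    (hΔ : comul ∘ₗ α.toLinearMap = TensorProduct.map α.toLinearMap α.toLinearMap ∘ₗ comul)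
    (hε : counit ∘ₗ α.toLinearMap = counit (R := k))
    (hS : antipode k ∘ₗ α.toLinearMap = α.toLinearMap ∘ₗ antipode k) :
    IsHomComoduleAlgebra (TensorProduct.congr α α)
      (opTensorMul ((LinearMap.mul k H).compr₂ α.toLinearMap))
      (opTensorComul (comul ∘ₗ α.symm.toLinearMap)) (opTensorCounit counit) α
      ((LinearMap.mul k H).compr₂ α.toLinearMap) 1 (1 ⊗ₜ 1)
      (TensorProduct.map α.toLinearMap (TensorProduct.map α.symm.toLinearMap .id) ∘ₗ
        (TensorProduct.leftComm k H H H).toLinearMap ∘ₗ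
          TensorProduct.map (antipode k) (comul ∘ₗ α.symm.toLinearMap) ∘ₗ
            comul ∘ₗ α.symm.toLinearMap) := by
  have hΔ_symm : comul ∘ₗ α.symm.toLinearMap =
      TensorProduct.map α.symm.toLinearMap α.symm.toLinearMap ∘ₗ comul := by
    rw [LinearEquiv.comp_toLinearMap_symm_eq, comp_assoc, hΔ, ← comp_assoc,
      ← TensorProduct.map_comp]
    simp
  have hε_symm : counit ∘ₗ α.symm.toLinearMap = counit (R := k) := by
    rw [LinearEquiv.comp_toLinearMap_symm_eq, hε]
  have hone_symm : α.symm 1 = 1 := α.symm_apply_eq.mpr hone.symm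
  have twisted : IsHomComoduleAlgebra (TensorProduct.congr α α)
      (opTensorMul ((LinearMap.mul k H).compr₂ α.toLinearMap))
      (opTensorComul (comul ∘ₗ α.symm.toLinearMap)) (opTensorCounit counit) α
      ((LinearMap.mul k H).compr₂ α.toLinearMap) 1 (1 ⊗ₜ 1)
      (hopfCoact k H ∘ₗ α.symm.toLinearMap) := by
    rw [opTensorMul_compr₂, opTensorComul_comp]
    exact isHomComoduleAlgebra_hopfCoact.twist hmul hone
      (LinearMap.congr_fun (hopfCoact_comp hΔ hS))
  have pushed := twisted.map (f := TensorProduct.map α.symm.toLinearMap α.symm.toLinearMap)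
    (β' := TensorProduct.congr α α) (by simp [← TensorProduct.map_comp])
    (map_opTensorMul (mul' := (LinearMap.mul k H).compr₂ α.toLinearMap)
      fun a b ↦ by simp [hmul, α.symm_apply_eq])
    (opTensorComul_comp_map (by rw [← comp_assoc, ← hΔ_symm]))
    (opTensorCounit_comp_map hε_symm)
  rw [← lTensor_map_symm_comp_hopfCoact_comp_symm hΔ_symm]
  simpa only [TensorProduct.map_tmul, LinearEquiv.coe_coe, hone_symm] using pushed

end HopfTwist

section Untwist

open LinearMap

variable {k H : Type*} [CommRing k] [AddCommGroup H] [Module k H]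
  {α : H ≃ₗ[k] H} {mul : H →ₗ[k] H →ₗ[k] H} {one : H}
  {Δ : H →ₗ[k] H ⊗[k] H} {ε : H →ₗ[k] k} {S : H →ₗ[k] H}

theorem IsHomAlgebra.symm_map_mul (h : IsHomAlgebra α mul one) (a b : H) :
    α.symm (mul a b) = mul (α.symm a) (α.symm b) := by
  obtain ⟨-, -, -, hα, -⟩ := h
  rw [α.symm_apply_eq, hα, α.apply_symm_apply, α.apply_symm_apply]

/-- The ring underlying a Hom-algebra, with the untwisted product `a * b = α⁻¹(ab)`. -/
abbrev IsHomAlgebra.untwistRing (h : IsHomAlgebra α mul one) : Ring H where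
  __ := ‹AddCommGroup H›
  mul a b := α.symm (mul a b)
  one := one
  mul_assoc a b c := by
    change α.symm (mul (α.symm (mul a b)) c) = α.symm (mul a (α.symm (mul b c)))
    simpa [h.symm_map_mul] using (h.1 (α.symm (α.symm a)) (α.symm (α.symm b))
      (α.symm (α.symm c))).symm
  one_mul a := α.symm_apply_eq.mpr (h.2.2.1 a)
  mul_one a := α.symm_apply_eq.mpr (h.2.1 a)
  left_distrib a b c := show α.symm (mul a (b + c)) = α.symm (mul a b) + α.symm (mul a c) by simp
  right_distrib a b c := show α.symm (mul (a + b) c) = α.symm (mul a c) + α.symm (mul b c) by simp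
  zero_mul a := show α.symm (mul 0 a) = 0 by simp
  mul_zero a := show α.symm (mul a 0) = 0 by simp

/-- The `k`-algebra structure on the ring `IsHomAlgebra.untwistRing`. -/
abbrev IsHomAlgebra.untwistAlgebra (h : IsHomAlgebra α mul one) :
    letI := h.untwistRing
    Algebra k H :=
  letI := h.untwistRing
  Algebra.ofModule
    (fun r a b ↦ show α.symm (mul (r • a) b) = r • α.symm (mul a b) by simp)
    (fun r a b ↦ show α.symm (mul a (r • b)) = r • α.symm (mul a b) by simp)

/-- The coalgebra underlying a Hom-coalgebra, with the untwisted coproduct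
`h ↦ Δ(α(h)) = α(h₁) ⊗ α(h₂)`. -/
abbrev IsHomCoalgebra.untwistCoalgebra (h : IsHomCoalgebra α Δ ε) : Coalgebra k H where
  comul := Δ ∘ₗ α.toLinearMap
  counit := ε
  coassoc := by
    ext c
    have hc := h.1 (α (α c))
    rw [h.2.2.2.1 (α c), ← comp_apply, ← comp_apply (TensorProduct.map Δ _),
      ← TensorProduct.map_comp, ← TensorProduct.map_comp, α.symm_comp] at hc
    exact hc.symm
  rTensor_counit_comp_comul := by
    ext c
    apply (TensorProduct.lid k H).injective
    simpa [rTensor_def] using h.2.1 (α c)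
  lTensor_counit_comp_comul := by
    ext c
    apply (TensorProduct.rid k H).injective
    simpa [lTensor_def] using h.2.2.1 (α c)

theorem IsHomAlgebra.mul'_untwist (h : IsHomAlgebra α mul one) :
    letI := h.untwistRing
    letI := h.untwistAlgebra
    mul' k H = α.symm.toLinearMap ∘ₗ lift mul := by
  ext; rfl

theorem IsHomAlgebra.tensor_mul_untwist (h : IsHomAlgebra α mul one) (x y : H ⊗[k] H) :
    letI := h.untwistRing
    letI := h.untwistAlgebra
    x * y = TensorProduct.map α.symm.toLinearMap α.symm.toLinearMap
      (TensorProduct.map (lift mul) (lift mul)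
        (TensorProduct.tensorTensorTensorComm k H H H H (x ⊗ₜ y))) := by
  let _ := h.untwistRing
  let _ := h.untwistAlgebra
  rw [← mul'_apply (R := k), mul'_tensor, h.mul'_untwist, TensorProduct.map_comp]
  rfl

/-- The bialgebra underlying a Hom-bialgebra. -/
abbrev IsHomBialgebra.untwistBialgebra (h : IsHomBialgebra α mul one Δ ε) :
    letI := h.1.untwistRing
    Bialgebra k H :=
  letI := h.1.untwistRing
  letI := h.1.untwistAlgebra
  letI := h.2.1.untwistCoalgebra
  Bialgebra.mk' k H h.2.2.2.2.2
    (fun {a b} ↦ by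
      obtain ⟨-, ⟨-, -, -, -, hε⟩, -, -, hεmul, -⟩ := h
      change ε (α.symm (mul a b)) = ε a * ε b
      rw [← hε, α.apply_symm_apply, hεmul])
    (by
      obtain ⟨⟨-, -, -, -, hone⟩, -, -, hΔone, -⟩ := h
      change Δ (α one) = one ⊗ₜ one
      rw [hone, hΔone])
    (fun {a b} ↦ by
      have ⟨⟨_, _, _, hmul, _⟩, ⟨_, _, _, hΔ, _⟩, hΔmul, _⟩ := h
      change Δ (α (α.symm (mul a b))) = Δ (α a) * Δ (α b)
      rw [h.1.tensor_mul_untwist, ← hΔmul, ← hmul, hΔ (mul a b), α.apply_symm_apply,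
        TensorProduct.map_map]
      simp)

theorem IsHomBialgebra.mul'_comp_comp_comul (h : IsHomBialgebra α mul one Δ ε)
    {f : H ⊗[k] H →ₗ[k] H ⊗[k] H} (hf : ∀ a, lift mul (f (Δ a)) = ε a • one) :
    letI := h.1.untwistRing
    letI := h.untwistBialgebra
    mul' k H ∘ₗ f ∘ₗ Coalgebra.comul = Algebra.linearMap k H ∘ₗ Coalgebra.counit := by
  have ⟨⟨_, _, _, _, hone⟩, ⟨_, _, _, _, hε⟩, _⟩ := h
  rw [h.1.mul'_untwist]
  ext a
  calc α.symm (lift mul (f (Δ (α a)))) = ε a • one := by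
        rw [hf, map_smul, hε, α.symm_apply_eq.mpr hone.symm]
    _ = _ := rfl

/-- The Hopf algebra underlying a Hom-Hopf algebra, with the same antipode. -/
abbrev IsHomHopfAlgebra.untwistHopfAlgebra (h : IsHomHopfAlgebra α mul one Δ ε S) :
    letI := h.1.1.untwistRing
    HopfAlgebra k H :=
  letI := h.1.1.untwistRing
  letI := h.1.untwistBialgebra
  { antipode := S
    mul_antipode_rTensor_comul := h.1.mul'_comp_comp_comul h.2.2.1
    mul_antipode_lTensor_comul := h.1.mul'_comp_comp_comul h.2.2.2 }

end Untwist

/-- Let `(H,α)` be a monoidal Hom-Hopf algebra. The map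
`ρ : H → H ⊗ (H^op⊗H)`, `h ↦ α(h₂₁) ⊗ (α⁻¹(S(h₁)) ⊗ h₂₂)` makes `(H,α)` a right
Hom-comodule algebra over the monoidal Hom-bialgebra `(H^op⊗H, α⊗α)`; in particular ρ
is multiplicative: `ρ(gh) = ρ(g)ρ(h)`, where `(h⊗k)(h'⊗k') = h'h ⊗ kk'`. -/
theorem hopf_comodule_algebra_over_opTensor
    {k H : Type*} [CommRing k] [AddCommGroup H] [Module k H]
    (α : H ≃ₗ[k] H) (mul : H →ₗ[k] H →ₗ[k] H) (one : H)
    (Δ : H →ₗ[k] H ⊗[k] H) (ε : H →ₗ[k] k) (S : H →ₗ[k] H)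
    (hH : IsHomHopfAlgebra α mul one Δ ε S) :
    IsHomComoduleAlgebra (B := H ⊗[k] H)
      (TensorProduct.congr α α) (opTensorMul mul)
      (opTensorComul Δ) (opTensorCounit ε)
      α mul one (one ⊗ₜ one)
      ((TensorProduct.map α.toLinearMap (TensorProduct.map α.symm.toLinearMap LinearMap.id)) ∘ₗ
        (TensorProduct.leftComm k H H H).toLinearMap ∘ₗ
          (TensorProduct.map S Δ) ∘ₗ Δ) := by
  let _ := hH.1.1.untwistRing
  let _ := hH.untwistHopfAlgebra
  have ⟨⟨⟨_, _, _, hmul, hone⟩, ⟨_, _, _, hΔ, hε⟩, _⟩, hS, _⟩ := hH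
  have mul_eq : (LinearMap.mul k H).compr₂ α.toLinearMap = mul :=
    LinearMap.ext₂ fun a b ↦ α.apply_symm_apply (mul a b)
  have comul_eq : Coalgebra.comul (R := k) ∘ₗ α.symm.toLinearMap = Δ :=
    α.comp_symm_cancel_right Δ
  have map_untwist_mul (a b : H) : α (α.symm (mul a b)) = α.symm (mul (α a) (α b)) := by
    rw [← hmul, α.apply_symm_apply, α.symm_apply_apply]
  have twisted := isHomComoduleAlgebra_twist_hopfCoact (k := k) map_untwist_mul hone
    (LinearMap.ext fun a ↦ hΔ (α a)) (LinearMap.ext hε) (LinearMap.ext hS)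
  rwa [mul_eq, comul_eq] at twisted

end HomPaper
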